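/- Conversely, let U ⊆ ℝ² be a connected open rectangle and F, G : U → ℝ smooth with ∂_y F = ∂_x G. Then for each (x₀,y₀) ∈ U and each positive constant c there is a unique smooth positive function q on U with q(x₀,y₀) = c, ∂_x q = F q, and ∂_y q = G q. -/

import Mathlib

open Real Set

/-- Partial derivative of `f` in the `k`-th coordinate direction. -/
noncomputable def pd {n : ℕ} (f : (Fin n → ℝ) → ℝ) (k : Fin n) (p : Fin n → ℝ) : ℝ :=
  fderiv ℝ f p (Pi.single k 1)

/-- Christoffel symbols of the second kind of `g` (with inverse matrix field `ginv`). -/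
noncomputable def christoffel {n : ℕ} (g ginv : (Fin n → ℝ) → Matrix (Fin n) (Fin n) ℝ)
    (i j k : Fin n) (p : Fin n → ℝ) : ℝ :=
  (1 / 2) * ∑ m, ginv p i m *
    (pd (fun q => g q j m) k p + pd (fun q => g q k m) j p - pd (fun q => g q j k) m p)

/-- Riemann curvature tensor `R^i_{jkl}` of connection coefficients `Γ`. -/
noncomputable def riemann {n : ℕ} (Γ : Fin n → Fin n → Fin n → (Fin n → ℝ) → ℝ)
    (i j k l : Fin n) (p : Fin n → ℝ) : ℝ :=
  pd (Γ i j l) k p - pd (Γ i j k) l p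
    + (∑ m, Γ i m k p * Γ m j l p) - ∑ m, Γ i m l p * Γ m j k p

/-!
The compatibility condition says that the `1`-form `ω = ∑ Fᵢ dxᵢ` is closed, so on a convex open set
it has a primitive `f`, and `c * exp (f - f p₀)` solves `dq = q ω`. If `q` is any solution, then
`q * exp (-f)` has zero derivative, hence is constant.
-/

section ExponentialEquation

variable {E : Type*} [NormedAddCommGroup E] [NormedSpace ℝ E] {f q : E → ℝ}

theorem hasFDerivAt_const_mul_exp_sub {p : E} {L : E →L[ℝ] ℝ} (hf : HasFDerivAt f L p) (c a : ℝ) :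
    HasFDerivAt (fun x => c * exp (f x - a)) ((c * exp (f p - a)) • L) p := by
  simpa only [smul_smul] using (hf.sub_const a).exp.const_mul c

theorem hasFDerivAt_mul_exp_neg_zero {p : E} {L : E →L[ℝ] ℝ} (hf : HasFDerivAt f L p)
    (hq : HasFDerivAt q (q p • L) p) :
    HasFDerivAt (fun x => q x * exp (-f x)) (0 : E →L[ℝ] ℝ) p := by
  refine (hq.mul hf.neg.exp).congr_fderiv ?_
  module

theorem eqOn_const_mul_exp_sub {ω : E → E →L[ℝ] ℝ} {U : Set E} (hUo : IsOpen U)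
    (hUc : IsPreconnected U) (hf : ∀ p ∈ U, HasFDerivAt f (ω p) p)
    (hq : ∀ p ∈ U, HasFDerivAt q (q p • ω p) p) {p₀ : E} (hp₀ : p₀ ∈ U) :
    EqOn (fun p => q p₀ * exp (f p - f p₀)) q U := by
  intro p hp
  have hderiv : ∀ x ∈ U, HasFDerivAt (fun x => q x * exp (-f x)) (0 : E →L[ℝ] ℝ) x :=
    fun x hx => hasFDerivAt_mul_exp_neg_zero (hf x hx) (hq x hx)
  have hconst : q p * exp (-f p) = q p₀ * exp (-f p₀) :=
    hUo.is_const_of_fderiv_eq_zero hUc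
      (fun x hx => (hderiv x hx).differentiableAt.differentiableWithinAt)
      (fun x hx => (hderiv x hx).fderiv) hp hp₀
  calc q p₀ * exp (f p - f p₀)
      = q p₀ * exp (-f p₀) * exp (f p) := by rw [mul_assoc, ← exp_add, neg_add_eq_sub]
    _ = q p * (exp (-f p) * exp (f p)) := by rw [← hconst, mul_assoc]
    _ = q p := by rw [← exp_add, neg_add_cancel, exp_zero, mul_one]

end ExponentialEquation

theorem contDiffOn_succ_of_hasFDerivAt {𝕜 E V : Type*} [NontriviallyNormedField 𝕜]
    [NormedAddCommGroup E] [NormedSpace 𝕜 E] [NormedAddCommGroup V] [NormedSpace 𝕜 V]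
    {U : Set E} (hU : IsOpen U) {f : E → V} {f' : E → E →L[𝕜] V} {m : ℕ∞}
    (hf' : ContDiffOn 𝕜 m f' U) (hf : ∀ p ∈ U, HasFDerivAt f (f' p) p) :
    ContDiffOn 𝕜 (m + 1) f U :=
  (contDiffOn_succ_iff_hasFDerivWithinAt_of_uniqueDiffOn hU.uniqueDiffOn).2
    ⟨by simp, f', hf', fun p hp => (hf p hp).hasFDerivWithinAt⟩

section Coordinates

variable {n : ℕ} {F : Fin n → (Fin n → ℝ) → ℝ} {U : Set (Fin n → ℝ)} {p : Fin n → ℝ}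

/-- The differential `1`-form `∑ Fᵢ dxᵢ` on `ℝⁿ`, as a field of continuous linear functionals. The
system `∂ᵢ q = Fᵢ q` becomes the single equation `dq = q • coordForm F`. -/
noncomputable def coordForm (F : Fin n → (Fin n → ℝ) → ℝ) (p : Fin n → ℝ) : (Fin n → ℝ) →L[ℝ] ℝ :=
  ∑ i, F i p • ContinuousLinearMap.proj i

theorem coordForm_apply (F : Fin n → (Fin n → ℝ) → ℝ) (p v : Fin n → ℝ) :
    coordForm F p v = ∑ i, F i p * v i := by
  simp [coordForm]

theorem fderiv_apply_eq_sum_pd (g : (Fin n → ℝ) → ℝ) (p v : Fin n → ℝ) :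
    fderiv ℝ g p v = ∑ i, v i * pd g i p := by
  conv_lhs => rw [pi_eq_sum_univ' v]
  simp only [map_sum, map_smul, smul_eq_mul, pd]

theorem fderiv_eq_smul_coordForm_iff {q : (Fin n → ℝ) → ℝ} :
    fderiv ℝ q p = q p • coordForm F p ↔ ∀ i, pd q i p = F i p * q p := by
  constructor
  · intro h i
    simp [pd, h, coordForm_apply, Pi.single_apply, mul_comm]
  · intro h
    ext v
    simp only [fderiv_apply_eq_sum_pd, h, smul_apply, coordForm_apply, smul_eq_mul,
      Finset.mul_sum]
    exact Finset.sum_congr rfl fun i _ => by ring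

theorem contDiffOn_coordForm {m : WithTop ℕ∞} (hF : ∀ i, ContDiffOn ℝ m (F i) U) :
    ContDiffOn ℝ m (coordForm F) U :=
  ContDiffOn.sum fun i _ => (hF i).smul contDiffOn_const

theorem fderiv_coordForm_apply (hF : ∀ i, DifferentiableAt ℝ (F i) p) (v w : Fin n → ℝ) :
    fderiv ℝ (coordForm F) p v w = ∑ i, ∑ j, v j * pd (F i) j p * w i := by
  have hderiv : HasFDerivAt (coordForm F)
      (∑ i, (fderiv ℝ (F i) p).smulRight (ContinuousLinearMap.proj (R := ℝ) i)) p :=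
    HasFDerivAt.fun_sum fun i _ => (hF i).hasFDerivAt.smul_const
      (ContinuousLinearMap.proj (R := ℝ) (φ := fun _ => ℝ) i)
  simp [hderiv.fderiv, fderiv_apply_eq_sum_pd, Finset.sum_mul]

theorem fderiv_coordForm_symm (hF : ∀ i, DifferentiableAt ℝ (F i) p)
    (hcompat : ∀ i j, pd (F i) j p = pd (F j) i p) (v w : Fin n → ℝ) :
    fderiv ℝ (coordForm F) p v w = fderiv ℝ (coordForm F) p w v := by
  rw [fderiv_coordForm_apply hF, fderiv_coordForm_apply hF, Finset.sum_comm]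
  refine Finset.sum_congr rfl fun j _ => Finset.sum_congr rfl fun i _ => ?_
  rw [hcompat i j]
  ring

theorem exists_hasFDerivAt_coordForm (hUo : IsOpen U) (hUc : Convex ℝ U)
    (hF : ∀ i, DifferentiableOn ℝ (F i) U)
    (hcompat : ∀ p ∈ U, ∀ i j, pd (F i) j p = pd (F j) i p) :
    ∃ f : (Fin n → ℝ) → ℝ, ∀ p ∈ U, HasFDerivAt f (coordForm F p) p :=
  hUc.exists_forall_hasFDerivAt_of_fderiv_symmetric hUo
    (DifferentiableOn.fun_sum fun i _ => (hF i).smul_const _)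
    fun p hp => fderiv_coordForm_symm
      (fun i => (hF i).differentiableAt (hUo.mem_nhds hp)) (hcompat p hp)

theorem existence_uniqueness_integrating_general (hUo : IsOpen U) (hUc : Convex ℝ U)
    {m : ℕ∞} (hm : m ≠ 0) (hF : ∀ i, ContDiffOn ℝ m (F i) U)
    (hcompat : ∀ p ∈ U, ∀ i j, pd (F i) j p = pd (F j) i p)
    {p₀ : Fin n → ℝ} (hp₀ : p₀ ∈ U) (c : ℝ) :
    ∃ q : (Fin n → ℝ) → ℝ,
      (ContDiffOn ℝ (m + 1) q U ∧ (∀ p ∈ U, SignType.sign (q p) = SignType.sign c) ∧ q p₀ = c ∧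
        ∀ p ∈ U, ∀ i, pd q i p = F i p * q p) ∧
      ∀ q' : (Fin n → ℝ) → ℝ, DifferentiableOn ℝ q' U → q' p₀ = c →
        (∀ p ∈ U, ∀ i, pd q' i p = F i p * q' p) → EqOn q q' U := by
  obtain ⟨f, hf⟩ := exists_hasFDerivAt_coordForm hUo hUc
    (fun i => (hF i).differentiableOn (mod_cast hm)) hcompat
  have hfm : ContDiffOn ℝ (m + 1) f U :=
    contDiffOn_succ_of_hasFDerivAt hUo (contDiffOn_coordForm hF) hf
  refine ⟨fun p => c * exp (f p - f p₀),
    ⟨contDiffOn_const.mul (hfm.sub contDiffOn_const).exp, fun p _ => ?_, by simp, fun p hp => ?_⟩,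
    fun q' hq' hq'c hq'F => ?_⟩
  · rw [sign_mul, sign_pos (exp_pos _), mul_one]
  · exact fderiv_eq_smul_coordForm_iff.1 (hasFDerivAt_const_mul_exp_sub (hf p hp) c (f p₀)).fderiv
  · have hq'f : ∀ p ∈ U, HasFDerivAt q' (q' p • coordForm F p) p := fun p hp =>
      fderiv_eq_smul_coordForm_iff.2 (hq'F p hp) ▸
        (hq'.differentiableAt (hUo.mem_nhds hp)).hasFDerivAt
    simpa only [hq'c] using eqOn_const_mul_exp_sub hUo hUc.isPreconnected hf hq'f hp₀

end Coordinates

theorem isOpen_setOf_mem_and_mem {s t : Set ℝ} (hs : IsOpen s) (ht : IsOpen t) :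
    IsOpen {p : Fin 2 → ℝ | p 0 ∈ s ∧ p 1 ∈ t} :=
  (hs.preimage (continuous_apply 0)).inter (ht.preimage (continuous_apply 1))

theorem convex_setOf_mem_and_mem {s t : Set ℝ} (hs : Convex ℝ s) (ht : Convex ℝ t) :
    Convex ℝ {p : Fin 2 → ℝ | p 0 ∈ s ∧ p 1 ∈ t} :=
  (hs.linear_preimage (LinearMap.proj (R := ℝ) (φ := fun _ => ℝ) 0)).inter
    (ht.linear_preimage (LinearMap.proj (R := ℝ) (φ := fun _ => ℝ) 1))

/-- Conversely, if `∂_y F = ∂ₓ G` on an open rectangle then the linear system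
`qₓ = F q`, `q_y = G q` has a unique smooth positive solution with a prescribed
positive value at any base point. -/
theorem existence_uniqueness_integrating (a₁ b₁ a₂ b₂ : ℝ)
    (U : Set (Fin 2 → ℝ))
    (hUrect : U = {p : Fin 2 → ℝ | p 0 ∈ Ioo a₁ b₁ ∧ p 1 ∈ Ioo a₂ b₂})
    (F G : (Fin 2 → ℝ) → ℝ)
    (hF : ContDiffOn ℝ (⊤ : ℕ∞) F U) (hG : ContDiffOn ℝ (⊤ : ℕ∞) G U)
    (hcompat : ∀ p ∈ U, pd F 1 p = pd G 0 p)
    (p₀ : Fin 2 → ℝ) (hp₀ : p₀ ∈ U) (c : ℝ) (hc : 0 < c) :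
    ∃ q : (Fin 2 → ℝ) → ℝ,
      (ContDiffOn ℝ (⊤ : ℕ∞) q U ∧ (∀ p ∈ U, 0 < q p) ∧ q p₀ = c ∧
        (∀ p ∈ U, pd q 0 p = F p * q p) ∧ (∀ p ∈ U, pd q 1 p = G p * q p)) ∧
      ∀ q' : (Fin 2 → ℝ) → ℝ,
        (ContDiffOn ℝ (⊤ : ℕ∞) q' U ∧ (∀ p ∈ U, 0 < q' p) ∧ q' p₀ = c ∧
          (∀ p ∈ U, pd q' 0 p = F p * q' p) ∧ (∀ p ∈ U, pd q' 1 p = G p * q' p)) →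
        EqOn q q' U := by
  subst hUrect
  obtain ⟨q, ⟨hq, hqsign, hqc, hqF⟩, huniq⟩ := existence_uniqueness_integrating_general
    (isOpen_setOf_mem_and_mem isOpen_Ioo isOpen_Ioo)
    (convex_setOf_mem_and_mem (convex_Ioo a₁ b₁) (convex_Ioo a₂ b₂))
    ENat.top_ne_zero (F := ![F, G]) (Fin.forall_fin_two.2 ⟨hF, hG⟩)
    (fun p hp => by simp [Fin.forall_fin_two, hcompat p hp]) hp₀ c
  simp only [Fin.forall_fin_two] at hqF huniq
  exact ⟨q,
    ⟨hq, fun p hp => sign_eq_one_iff.1 ((hqsign p hp).trans (sign_pos hc)), hqc,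
      fun p hp => (hqF p hp).1, fun p hp => (hqF p hp).2⟩,
    fun q' ⟨hq', _, hq'c, hq'0, hq'1⟩ => huniq q' (hq'.differentiableOn (by simp)) hq'c
      fun p hp => ⟨hq'0 p hp, hq'1 p hp⟩⟩
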